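/- arXiv:0907.1120 — 2 statements merged into one kernel-verified Lean document; each statement's English description precedes it below -/
import Mathlib

section
/- Let (u^k, E^k) and (u, E) be admissible pairs and let p^k, p ∈ L²(Ω; Sym(n)). Assume: u^k → u strongly in L²(ℝⁿ; ℝⁿ); for every k and every admissible pair (v, F): ∫_Ω p^k·F dx = 0; and p^k → p weakly in L²(Ω; Sym(n)). Then for every φ ∈ C^∞(ℝⁿ; ℝ) which is bounded and has bounded gradient, ∫_{ℝⁿ} φ (p^k·E^k) dx → ∫_{ℝⁿ} φ (p·E) dx, where p^k, p are extended by zero outside Ω. -/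
open MeasureTheory Filter Topology

noncomputable section

abbrev RV (n : ℕ) := Fin n → ℝ
abbrev Mat (n : ℕ) := Matrix (Fin n) (Fin n) ℝ
abbrev MField (n : ℕ) := RV n → Mat n
abbrev VField (n : ℕ) := RV n → RV n

/-- Frobenius inner product of matrices: `P·Q = ∑ᵢⱼ Pᵢⱼ Qᵢⱼ`. -/
def mdot {n : ℕ} (P Q : Mat n) : ℝ := ∑ i, ∑ j, P i j * Q i j

/-- A matrix field takes symmetric values a.e. on `s`. -/
def SymOn {n : ℕ} (E : MField n) (s : Set (RV n)) : Prop :=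
  ∀ᵐ x ∂(volume : Measure (RV n)), x ∈ s → ∀ i j, E x i j = E x j i

/-- Matrix field in L² on `s`: componentwise measurable and `|E|²` integrable on `s`. -/
def L2MOn {n : ℕ} (E : MField n) (s : Set (RV n)) : Prop :=
  (∀ i j, Measurable fun x => E x i j) ∧
    IntegrableOn (fun x => mdot (E x) (E x)) s volume

/-- Vector field in L² on `s`. -/
def L2VOn {n : ℕ} (u : VField n) (s : Set (RV n)) : Prop :=
  (∀ i, Measurable fun x => u x i) ∧
    IntegrableOn (fun x => ∑ i, u x i * u x i) s volume

/-- Scalar function in L∞ on `s`. -/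
def LinfROn {n : ℕ} (f : RV n → ℝ) (s : Set (RV n)) : Prop :=
  Measurable f ∧ ∃ M : ℝ, ∀ᵐ x ∂(volume : Measure (RV n)), x ∈ s → |f x| ≤ M

/-- Matrix field in L∞ on `s`. -/
def LinfMOn {n : ℕ} (F : MField n) (s : Set (RV n)) : Prop :=
  (∀ i j, Measurable fun x => F x i j) ∧
    ∃ M : ℝ, ∀ᵐ x ∂(volume : Measure (RV n)), x ∈ s → ∀ i j, |F x i j| ≤ M

/-- `E` is the weak symmetrized gradient of `u`:
for all `i j` and every test function `φ ∈ C_c^∞(ℝⁿ)`,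
`∫ Eᵢⱼ φ = -(1/2) ∫ (uᵢ ∂ⱼφ + uⱼ ∂ᵢφ)`. -/
def IsSymGrad {n : ℕ} (u : VField n) (E : MField n) : Prop :=
  ∀ i j, ∀ φ : RV n → ℝ, ContDiff ℝ (⊤ : ℕ∞) φ → HasCompactSupport φ →
    ∫ x, E x i j * φ x =
      -(1 / 2) * ∫ x, (u x i * fderiv ℝ φ x (Pi.single j 1) +
        u x j * fderiv ℝ φ x (Pi.single i 1))

/-- Admissible pair: the encoding of `v ∈ H¹₀(Ω;ℝⁿ)` together with its symmetrized
gradient `ε(v)`. -/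
structure AdmPair (n : ℕ) (Ω : Set (RV n)) where
  u : VField n
  E : MField n
  hu : L2VOn u Set.univ
  hE : L2MOn E Set.univ
  hsym : SymOn E Set.univ
  huz : ∀ᵐ x ∂(volume : Measure (RV n)), x ∉ Ω → u x = 0
  hEz : ∀ᵐ x ∂(volume : Measure (RV n)), x ∉ Ω → E x = 0
  hgrad : IsSymGrad u E

/-- Weak convergence in `L²(s; Sym(n))`. -/
def WeakL2M {n : ℕ} (Ek : ℕ → MField n) (E : MField n) (s : Set (RV n)) : Prop :=
  ∀ G : MField n, L2MOn G s →
    Tendsto (fun k => ∫ x in s, mdot (Ek k x) (G x)) atTop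
      (𝓝 (∫ x in s, mdot (E x) (G x)))

/-- Weak convergence in `L²(s; ℝⁿ)`. -/
def WeakL2V {n : ℕ} (uk : ℕ → VField n) (u : VField n) (s : Set (RV n)) : Prop :=
  ∀ g : VField n, L2VOn g s →
    Tendsto (fun k => ∫ x in s, ∑ i, uk k x i * g x i) atTop
      (𝓝 (∫ x in s, ∑ i, u x i * g x i))

/-- Weak* convergence in `L∞(s)`. -/
def WeakStarLinf {n : ℕ} (fk : ℕ → RV n → ℝ) (f : RV n → ℝ) (s : Set (RV n)) : Prop :=
  ∀ h : RV n → ℝ, IntegrableOn h s volume →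
    Tendsto (fun k => ∫ x in s, fk k x * h x) atTop (𝓝 (∫ x in s, f x * h x))

/-- Weak convergence in `L¹(s)`. -/
def WeakL1 {n : ℕ} (fk : ℕ → RV n → ℝ) (f : RV n → ℝ) (s : Set (RV n)) : Prop :=
  ∀ g : RV n → ℝ, Measurable g →
    (∃ M : ℝ, ∀ᵐ x ∂(volume : Measure (RV n)), x ∈ s → |g x| ≤ M) →
    Tendsto (fun k => ∫ x in s, fk k x * g x) atTop (𝓝 (∫ x in s, f x * g x))

/-- Uniform integrability of a family on `s`. -/
def UnifIntOn {n : ℕ} (fk : ℕ → RV n → ℝ) (s : Set (RV n)) : Prop :=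
  ∀ ε : ℝ, 0 < ε → ∃ η : ℝ, 0 < η ∧ ∀ A : Set (RV n), MeasurableSet A → A ⊆ s →
    volume A < ENNReal.ofReal η → ∀ k, ∫ x in A, |fk k x| < ε

/-- The double-well integrand `min{½a|F+C|², ½b|F+D|²}`. -/
def phaseMin {n : ℕ} (a b : RV n → ℝ) (C D : MField n) (F : MField n) (x : RV n) : ℝ :=
  min (1 / 2 * a x * mdot (F x + C x) (F x + C x))
      (1 / 2 * b x * mdot (F x + D x) (F x + D x))

/-- The nonconvex energy. -/
def Jfun {n : ℕ} (Ω : Set (RV n)) (a b : RV n → ℝ) (C D : MField n) (F : MField n) : ℝ :=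
  ∫ x in Ω, phaseMin a b C D F x

/-- The infimum `α` of the nonconvex problem over admissible pairs. -/
def alphaInf {n : ℕ} (Ω : Set (RV n)) (a b : RV n → ℝ) (C D : MField n) : ℝ :=
  sInf { r : ℝ | ∃ P : AdmPair n Ω, r = Jfun Ω a b C D P.E }

/-- The convexified energy `∫ [½χₐa|F+C|² + ½χᵦb|F+D|²]`. -/
def Jconv {n : ℕ} (Ω : Set (RV n)) (χa χb a b : RV n → ℝ) (C D : MField n)
    (F : MField n) : ℝ :=
  ∫ x in Ω, (1 / 2 * χa x * a x * mdot (F x + C x) (F x + C x)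
    + 1 / 2 * χb x * b x * mdot (F x + D x) (F x + D x))

/-- `A⁺ = (aC + bD)/2`. -/
def Aplus {n : ℕ} (a b : RV n → ℝ) (C D : MField n) : MField n :=
  fun x => (2 : ℝ)⁻¹ • (a x • C x + b x • D x)

/-- `A⁻ = (bD − aC)/2`. -/
def Aminus {n : ℕ} (a b : RV n → ℝ) (C D : MField n) : MField n :=
  fun x => (2 : ℝ)⁻¹ • (b x • D x - a x • C x)

/-- The integrand on `Ω \ Ω₀`:
`(ab(C−D)/(b−a))·F + ((bD−aC)/(b−a))·q + ab(|C|²−|D|²)/(2(b−a)) − t·ab|C−D|²/(2(b−a))`. -/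
def Goff {n : ℕ} (a b : RV n → ℝ) (C D : MField n) (F q : MField n) (t : RV n → ℝ)
    (x : RV n) : ℝ :=
  a x * b x / (b x - a x) * mdot (C x - D x) (F x) +
    (b x - a x)⁻¹ * mdot (b x • D x - a x • C x) (q x) +
    a x * b x * (mdot (C x) (C x) - mdot (D x) (D x)) / (2 * (b x - a x)) -
    t x * (a x * b x * mdot (C x - D x) (C x - D x) / (2 * (b x - a x)))

/-- `Ω₀ = {x ∈ Ω : a(x) = b(x)}`. -/
def Omega0 {n : ℕ} (Ω : Set (RV n)) (a b : RV n → ℝ) : Set (RV n) :=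
  {x ∈ Ω | a x = b x}


theorem hilbert_weak_strong {H : Type*} [NormedAddCommGroup H] [InnerProductSpace ℝ H]
    [CompleteSpace H] (x y : ℕ → H) (x0 y0 : H)
    (hw : ∀ h : H, Tendsto (fun k => inner ℝ (x k) h) atTop (𝓝 (inner ℝ x0 h)))
    (hs : Tendsto (fun k => ‖y k - y0‖) atTop (𝓝 0)) :
    Tendsto (fun k => inner ℝ (x k) (y k)) atTop (𝓝 (inner ℝ x0 y0)) := by
  obtain ⟨C, hC⟩ : ∃ C, ∀ k, ‖innerSL ℝ (x k)‖ ≤ C := by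
    apply banach_steinhaus
    intro h
    obtain ⟨C, hC⟩ := ((hw h).norm).bddAbove_range
    exact ⟨C, fun k => by simpa using hC ⟨k, rfl⟩⟩
  have h2 : Tendsto (fun k => inner ℝ (x k) (y k - y0)) atTop (𝓝 0) := by
    apply squeeze_zero_norm (a := fun k => C * ‖y k - y0‖)
    · intro k
      refine (norm_inner_le_norm _ _).trans ?_
      have := hC k
      rw [innerSL_apply_norm] at this
      gcongr
    · simpa using hs.const_mul C
  have h3 := (hw y0).add h2
  rw [add_zero] at h3
  refine h3.congr fun k => ?_
  rw [← inner_add_right]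
  congr 1
  abel

theorem L2_inner_toLp {α : Type*} [MeasurableSpace α] (μ : Measure α) (f g : α → ℝ)
    (hf : MemLp f 2 μ) (hg : MemLp g 2 μ) :
    inner ℝ (hf.toLp f) (hg.toLp g) = ∫ x, f x * g x ∂μ := by
  rw [L2.inner_def]
  apply integral_congr_ae
  filter_upwards [hf.coeFn_toLp, hg.coeFn_toLp] with x h1 h2
  rw [h1, h2]
  simp [mul_comm]

theorem L2_weak_strong {α : Type*} [MeasurableSpace α] (μ : Measure α)
    (f g : ℕ → α → ℝ) (f0 g0 : α → ℝ)
    (hf : ∀ k, MemLp (f k) 2 μ) (hg : ∀ k, MemLp (g k) 2 μ)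
    (hf0 : MemLp f0 2 μ) (hg0 : MemLp g0 2 μ)
    (hw : ∀ h : α → ℝ, Measurable h → MemLp h 2 μ →
      Tendsto (fun k => ∫ x, f k x * h x ∂μ) atTop (𝓝 (∫ x, f0 x * h x ∂μ)))
    (hs : Tendsto (fun k => ∫ x, (g k x - g0 x) ^ 2 ∂μ) atTop (𝓝 0)) :
    Tendsto (fun k => ∫ x, f k x * g k x ∂μ) atTop (𝓝 (∫ x, f0 x * g0 x ∂μ)) := by
  have key := hilbert_weak_strong (fun k => (hf k).toLp (f k)) (fun k => (hg k).toLp (g k))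
    (hf0.toLp f0) (hg0.toLp g0) ?_ ?_
  · simpa only [L2_inner_toLp] using key
  · intro h
    have h1 := hw h (Lp.stronglyMeasurable h).measurable (Lp.memLp h)
    have h2 : h = (Lp.memLp h).toLp h := (Lp.toLp_coeFn h _).symm
    rw [h2]
    simpa only [L2_inner_toLp] using h1
  · have h1 : ∀ k, ‖(hg k).toLp (g k) - hg0.toLp g0‖ = √(∫ x, (g k x - g0 x) ^ 2 ∂μ) := by
      intro k
      rw [← MemLp.toLp_sub, @norm_eq_sqrt_real_inner, L2_inner_toLp]
      simp [pow_two]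
    simp only [h1]
    have := (Real.continuous_sqrt.tendsto 0).comp hs
    rw [Real.sqrt_zero] at this
    exact this

theorem memLp_of_L2MOn {n : ℕ} {E : MField n} {s : Set (RV n)} (h : L2MOn E s) (i j : Fin n) :
    MemLp (fun x => E x i j) 2 (volume.restrict s) := by
  rw [memLp_two_iff_integrable_sq (h.1 i j).aestronglyMeasurable]
  refine Integrable.mono' h.2 ((h.1 i j).pow_const 2).aestronglyMeasurable ?_
  refine Eventually.of_forall fun x => ?_
  rw [Real.norm_of_nonneg (sq_nonneg _), pow_two]
  unfold mdot
  calc E x i j * E x i j ≤ ∑ b, E x i b * E x i b :=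
        Finset.single_le_sum (f := fun b => E x i b * E x i b)
          (fun b _ => mul_self_nonneg _) (Finset.mem_univ j)
    _ ≤ _ := Finset.single_le_sum (f := fun a => ∑ b, E x a b * E x a b)
          (fun a _ => Finset.sum_nonneg fun b _ => mul_self_nonneg _) (Finset.mem_univ i)

theorem memLp_of_L2VOn {n : ℕ} {u : VField n} {s : Set (RV n)} (h : L2VOn u s) (i : Fin n) :
    MemLp (fun x => u x i) 2 (volume.restrict s) := by
  rw [memLp_two_iff_integrable_sq (h.1 i).aestronglyMeasurable]
  refine Integrable.mono' h.2 ((h.1 i).pow_const 2).aestronglyMeasurable ?_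
  refine Eventually.of_forall fun x => ?_
  rw [Real.norm_of_nonneg (sq_nonneg _), pow_two]
  exact Finset.single_le_sum (f := fun b => u x b * u x b)
          (fun b _ => mul_self_nonneg _) (Finset.mem_univ i)

theorem L2MOn_of_memLp {n : ℕ} {E : MField n} {s : Set (RV n)}
    (hm : ∀ i j, Measurable fun x => E x i j)
    (h : ∀ i j, MemLp (fun x => E x i j) 2 (volume.restrict s)) : L2MOn E s := by
  refine ⟨hm, ?_⟩
  unfold mdot IntegrableOn
  exact integrable_finsetSum _ fun i _ => integrable_finsetSum _ fun j _ =>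
    (h i j).integrable_mul (h i j)

theorem L2VOn_of_memLp {n : ℕ} {u : VField n} {s : Set (RV n)}
    (hm : ∀ i, Measurable fun x => u x i)
    (h : ∀ i, MemLp (fun x => u x i) 2 (volume.restrict s)) : L2VOn u s := by
  refine ⟨hm, ?_⟩
  unfold IntegrableOn
  exact integrable_finsetSum _ fun i _ => (h i).integrable_mul (h i)

theorem memLp_bdd_mul {α : Type*} [MeasurableSpace α] {μ : Measure α} {f g : α → ℝ} {M : ℝ}
    (hf : Measurable f) (hb : ∀ x, |f x| ≤ M) (hg : MemLp g 2 μ) :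
    MemLp (fun x => f x * g x) 2 μ := by
  refine MemLp.of_le_mul (c := M) hg (hf.aestronglyMeasurable.mul hg.1) ?_
  refine Eventually.of_forall fun x => ?_
  rw [norm_mul]
  exact mul_le_mul_of_nonneg_right (hb x) (norm_nonneg _)

/-- `∂ⱼφ` -/
def pd {n : ℕ} (φ : RV n → ℝ) (j : Fin n) (x : RV n) : ℝ := fderiv ℝ φ x (Pi.single j 1)

/-- `sym(∇φ ⊗ u)` -/
def symT {n : ℕ} (φ : RV n → ℝ) (u : VField n) : MField n :=
  fun x i j => 1 / 2 * (pd φ j x * u x i + pd φ i x * u x j)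

theorem pd_cont {n : ℕ} {φ : RV n → ℝ} (hφ : ContDiff ℝ (⊤ : ℕ∞) φ) (j : Fin n) :
    Continuous (pd φ j) :=
  (hφ.continuous_fderiv (by simp)).clm_apply continuous_const

theorem pd_bdd {n : ℕ} {φ : RV n → ℝ} {M : ℝ} (hM : ∀ x, ‖fderiv ℝ φ x‖ ≤ M) (j : Fin n)
    (x : RV n) : |pd φ j x| ≤ M := by
  have h := (fderiv ℝ φ x).le_opNorm (Pi.single j 1)
  have h1 : ‖(Pi.single j 1 : RV n)‖ = 1 := by
    rw [Pi.norm_single, norm_one]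
  rw [h1, mul_one] at h
  exact h.trans (hM x)

theorem symT_meas {n : ℕ} {φ : RV n → ℝ} (hφ : ContDiff ℝ (⊤ : ℕ∞) φ) {u : VField n}
    (hu : ∀ i, Measurable fun x => u x i) (i j : Fin n) :
    Measurable fun x => symT φ u x i j :=
  (((pd_cont hφ j).measurable.mul (hu i)).add
    ((pd_cont hφ i).measurable.mul (hu j))).const_mul (1 / 2)

theorem symT_memLp {n : ℕ} {φ : RV n → ℝ} (hφ : ContDiff ℝ (⊤ : ℕ∞) φ) {M : ℝ}
    (hM : ∀ x, ‖fderiv ℝ φ x‖ ≤ M) {u : VField n} {s : Set (RV n)}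
    (hu : L2VOn u s) (i j : Fin n) :
    MemLp (fun x => symT φ u x i j) 2 (volume.restrict s) :=
  ((memLp_bdd_mul (pd_cont hφ j).measurable (pd_bdd hM j) (memLp_of_L2VOn hu i)).add
    (memLp_bdd_mul (pd_cont hφ i).measurable (pd_bdd hM i) (memLp_of_L2VOn hu j))).const_mul (1 / 2)

/-- The product of an admissible pair with a smooth function. -/
def mulAdm {n : ℕ} {Ω : Set (RV n)} (W : AdmPair n Ω) (φ : RV n → ℝ)
    (hφ : ContDiff ℝ (⊤ : ℕ∞) φ) {M N : ℝ} (hM : ∀ x, |φ x| ≤ M)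
    (hN : ∀ x, ‖fderiv ℝ φ x‖ ≤ N) : AdmPair n Ω where
  u := fun x i => φ x * W.u x i
  E := fun x i j => φ x * W.E x i j + symT φ W.u x i j
  hu := L2VOn_of_memLp (fun i => hφ.continuous.measurable.mul (W.hu.1 i))
    fun i => memLp_bdd_mul hφ.continuous.measurable hM (memLp_of_L2VOn W.hu i)
  hE := L2MOn_of_memLp
    (fun i j => (hφ.continuous.measurable.mul (W.hE.1 i j)).add (symT_meas hφ W.hu.1 i j))
    fun i j => (memLp_bdd_mul hφ.continuous.measurable hM (memLp_of_L2MOn W.hE i j)).add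
      (symT_memLp hφ hN W.hu i j)
  hsym := by
    filter_upwards [W.hsym] with x hx hxs i j
    rw [hx hxs i j]
    simp only [symT]
    ring
  huz := by
    filter_upwards [W.huz] with x hx hxs
    funext i
    simp [hx hxs]
  hEz := by
    filter_upwards [W.huz, W.hEz] with x hx hx2 hxs
    funext i j
    simp [hx hxs, hx2 hxs, symT]
  hgrad := by
    intro i j ψ hψ hc
    have hu : ∀ i, MemLp (fun x => W.u x i) 2 volume := fun i => by
      simpa using memLp_of_L2VOn W.hu i
    have hE : ∀ i j, MemLp (fun x => W.E x i j) 2 volume := fun i j => by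
      simpa using memLp_of_L2MOn W.hE i j
    have hφE : MemLp (fun x => φ x * W.E x i j) 2 volume :=
      memLp_bdd_mul hφ.continuous.measurable hM (hE i j)
    have hT : MemLp (fun x => symT φ W.u x i j) 2 volume := by
      simpa using symT_memLp hφ hN W.hu i j
    have hψm : MemLp ψ 2 volume := hψ.continuous.memLp_of_hasCompactSupport hc
    have hpd : ∀ l, MemLp (pd ψ l) 2 volume := fun l =>
      (pd_cont hψ l).memLp_of_hasCompactSupport (hc.fderiv_apply (𝕜 := ℝ) _)
    have hφu : ∀ l, MemLp (fun x => φ x * W.u x l) 2 volume := fun l =>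
      memLp_bdd_mul hφ.continuous.measurable hM (hu l)
    have key := W.hgrad i j (fun x => φ x * ψ x) (hφ.mul hψ) hc.mul_left
    have hd : ∀ l x, fderiv ℝ (fun x => φ x * ψ x) x (Pi.single l 1)
        = φ x * pd ψ l x + ψ x * pd φ l x := by
      intro l x
      rw [fderiv_fun_mul (hφ.differentiable (by simp) x) (hψ.differentiable (by simp) x)]
      simp [pd]
    simp only [hd] at key
    have e1 : ∫ x, (W.u x i * (φ x * pd ψ j x + ψ x * pd φ j x) +
          W.u x j * (φ x * pd ψ i x + ψ x * pd φ i x))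
        = ∫ x, ((φ x * W.u x i * pd ψ j x + φ x * W.u x j * pd ψ i x)
          + 2 * (symT φ W.u x i j * ψ x)) := by
      congr 1
      funext x
      simp only [symT]
      ring
    rw [e1, integral_add, integral_const_mul] at key
    · have e2 : ∫ x, (φ x * W.E x i j + symT φ W.u x i j) * ψ x
          = (∫ x, W.E x i j * (φ x * ψ x)) + ∫ x, symT φ W.u x i j * ψ x := by
        rw [← integral_add]
        · congr 1
          funext x
          ring
        · have := hφE.integrable_mul hψm
          refine this.congr (Eventually.of_forall fun x => ?_)
          simp only [Pi.mul_apply]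
          ring
        · exact hT.integrable_mul hψm
      change ∫ x, (φ x * W.E x i j + symT φ W.u x i j) * ψ x = -(1 / 2) *
        ∫ x, (φ x * W.u x i * pd ψ j x + φ x * W.u x j * pd ψ i x)
      rw [e2, key]
      ring
    · exact ((hφu i).integrable_mul (hpd j)).add ((hφu j).integrable_mul (hpd i))
    · exact (hT.integrable_mul hψm).const_mul 2

theorem mdot_integrable {n : ℕ} {p E : MField n} {s : Set (RV n)}
    (hp : L2MOn p s)
    (hE : ∀ i j, MemLp (fun x => E x i j) 2 (volume.restrict s)) :
    Integrable (fun x => mdot (p x) (E x)) (volume.restrict s) := by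
  unfold mdot
  exact integrable_finsetSum _ fun i _ => integrable_finsetSum _ fun j _ =>
    (memLp_of_L2MOn hp i j).integrable_mul (hE i j)

theorem integral_mdot {n : ℕ} {p E : MField n} {s : Set (RV n)}
    (hp : L2MOn p s)
    (hE : ∀ i j, MemLp (fun x => E x i j) 2 (volume.restrict s)) :
    ∫ x in s, mdot (p x) (E x) = ∑ i, ∑ j, ∫ x in s, p x i j * E x i j := by
  unfold mdot
  rw [integral_finsetSum]
  · refine Finset.sum_congr rfl fun i _ => ?_
    rw [integral_finsetSum]
    exact fun j _ => (memLp_of_L2MOn hp i j).integrable_mul (hE i j)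
  · exact fun i _ => integrable_finsetSum _ fun j _ =>
      (memLp_of_L2MOn hp i j).integrable_mul (hE i j)

theorem ker_identity {n : ℕ} {Ω : Set (RV n)} {p : MField n} (hp : L2MOn p Ω)
    (hker : ∀ W : AdmPair n Ω, ∫ x in Ω, mdot (p x) (W.E x) = 0) (W : AdmPair n Ω)
    (φ : RV n → ℝ) (hφ : ContDiff ℝ (⊤ : ℕ∞) φ) {M N : ℝ} (hM : ∀ x, |φ x| ≤ M)
    (hN : ∀ x, ‖fderiv ℝ φ x‖ ≤ N) :
    ∫ x in Ω, φ x * mdot (p x) (W.E x) = - ∫ x in Ω, mdot (p x) (symT φ W.u x) := by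
  have h := hker (mulAdm W φ hφ hM hN)
  have hWE : ∀ i j, MemLp (fun x => W.E x i j) 2 (volume.restrict Ω) := fun i j =>
    MemLp.mono_measure (Measure.restrict_mono_set volume (Set.subset_univ _))
      (memLp_of_L2MOn W.hE i j)
  have hT : ∀ i j, MemLp (fun x => symT φ W.u x i j) 2 (volume.restrict Ω) := fun i j =>
    MemLp.mono_measure (Measure.restrict_mono_set volume (Set.subset_univ _))
      (symT_memLp hφ hN W.hu i j)
  have e : ∀ x, mdot (p x) ((mulAdm W φ hφ hM hN).E x)
      = φ x * mdot (p x) (W.E x) + mdot (p x) (symT φ W.u x) := by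
    intro x
    simp only [mdot, mulAdm, Finset.mul_sum, ← Finset.sum_add_distrib]
    refine Finset.sum_congr rfl fun i _ => Finset.sum_congr rfl fun j _ => ?_
    ring
  simp only [e] at h
  rw [integral_add] at h
  · linarith
  · refine (mdot_integrable hp (E := fun x i j => φ x * W.E x i j) fun i j =>
      memLp_bdd_mul hφ.continuous.measurable hM (hWE i j)).congr
      (Eventually.of_forall fun x => ?_)
    simp only [mdot, Finset.mul_sum]
    refine Finset.sum_congr rfl fun i _ => Finset.sum_congr rfl fun j _ => ?_
    ring
  · exact mdot_integrable hp hT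

theorem symT_sub_sq {n : ℕ} {φ : RV n → ℝ} {N : ℝ}
    (hN : ∀ x, ‖fderiv ℝ φ x‖ ≤ N) (u v : VField n) (i j : Fin n) (x : RV n) :
    (symT φ u x i j - symT φ v x i j) ^ 2 ≤ N ^ 2 * ∑ l, (u x l - v x l) ^ 2 := by
  have hi : (u x i - v x i) ^ 2 ≤ ∑ l, (u x l - v x l) ^ 2 :=
    Finset.single_le_sum (f := fun l => (u x l - v x l) ^ 2)
      (fun b _ => sq_nonneg _) (Finset.mem_univ i)
  have hj : (u x j - v x j) ^ 2 ≤ ∑ l, (u x l - v x l) ^ 2 :=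
    Finset.single_le_sum (f := fun l => (u x l - v x l) ^ 2)
      (fun b _ => sq_nonneg _) (Finset.mem_univ j)
  have h1 : (pd φ j x) ^ 2 ≤ N ^ 2 := sq_le_sq' (abs_le.1 (pd_bdd hN j x)).1
    (abs_le.1 (pd_bdd hN j x)).2
  have h2 : (pd φ i x) ^ 2 ≤ N ^ 2 := sq_le_sq' (abs_le.1 (pd_bdd hN i x)).1
    (abs_le.1 (pd_bdd hN i x)).2
  have h3 := mul_le_mul h1 hi (sq_nonneg _) (sq_nonneg _)
  have h4 := mul_le_mul h2 hj (sq_nonneg _) (sq_nonneg _)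
  have e : symT φ u x i j - symT φ v x i j
      = 1 / 2 * (pd φ j x * (u x i - v x i) + pd φ i x * (u x j - v x j)) := by
    simp only [symT]
    ring
  rw [e]
  rw [← mul_pow] at h3 h4
  nlinarith [sq_nonneg (pd φ j x * (u x i - v x i) - pd φ i x * (u x j - v x j))]

/-- convergence of `∫ φ pᵏ·Eᵏ` for smooth bounded test functions,
step (P-3) in the proof of the lemma. -/
theorem statement6 {n : ℕ} (Ω : Set (RV n)) (hΩo : IsOpen Ω)
    (hΩb : Bornology.IsBounded Ω)
    (P : ℕ → AdmPair n Ω) (Q : AdmPair n Ω)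
    (pk : ℕ → MField n) (p : MField n)
    (hpkL2 : ∀ k, L2MOn (pk k) Ω) (hpkS : ∀ k, SymOn (pk k) Ω)
    (hpL2 : L2MOn p Ω) (hpS : SymOn p Ω)
    -- uᵏ → u strongly in L²(ℝⁿ; ℝⁿ)
    (hstrong : Tendsto (fun k => ∫ x, ∑ i, ((P k).u x i - Q.u x i) ^ 2) atTop (𝓝 0))
    -- each pᵏ annihilates all symmetrized gradients
    (hker : ∀ k, ∀ W : AdmPair n Ω, ∫ x in Ω, mdot (pk k x) (W.E x) = 0)
    -- pᵏ → p weakly in L²(Ω; Sym(n))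
    (hpw : WeakL2M pk p Ω) :
    ∀ φ : RV n → ℝ, ContDiff ℝ (⊤ : ℕ∞) φ → (∃ M : ℝ, ∀ x, |φ x| ≤ M) →
      (∃ M : ℝ, ∀ x, ‖fderiv ℝ φ x‖ ≤ M) →
      Tendsto (fun k => ∫ x in Ω, φ x * mdot (pk k x) ((P k).E x)) atTop
        (𝓝 (∫ x in Ω, φ x * mdot (p x) (Q.E x))) := by
  rintro φ hφ ⟨M, hM⟩ ⟨N, hN⟩
  have hmono : volume.restrict Ω ≤ volume.restrict (Set.univ : Set (RV n)) :=
    Measure.restrict_mono_set volume (Set.subset_univ _)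
  have hkerp : ∀ W : AdmPair n Ω, ∫ x in Ω, mdot (p x) (W.E x) = 0 := by
    intro W
    have h := hpw W.E (L2MOn_of_memLp W.hE.1 fun i j =>
      MemLp.mono_measure hmono (memLp_of_L2MOn W.hE i j))
    simp only [hker] at h
    exact tendsto_nhds_unique h tendsto_const_nhds
  have hT : ∀ (W : AdmPair n Ω) i j,
      MemLp (fun x => symT φ W.u x i j) 2 (volume.restrict Ω) := fun W i j =>
    MemLp.mono_measure hmono (symT_memLp hφ hN W.hu i j)
  rw [ker_identity hpL2 hkerp Q φ hφ hM hN]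
  have e : ∀ k, ∫ x in Ω, φ x * mdot (pk k x) ((P k).E x)
      = - ∫ x in Ω, mdot (pk k x) (symT φ (P k).u x) := fun k =>
    ker_identity (hpkL2 k) (hker k) (P k) φ hφ hM hN
  simp only [e]
  refine Tendsto.neg ?_
  rw [integral_mdot hpL2 (hT Q)]
  simp only [fun k => integral_mdot (hpkL2 k) (hT (P k))]
  refine tendsto_finsetSum _ fun i _ => tendsto_finsetSum _ fun j _ => ?_
  refine L2_weak_strong (volume.restrict Ω) (fun k x => pk k x i j)
    (fun k x => symT φ (P k).u x i j) (fun x => p x i j) (fun x => symT φ Q.u x i j)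
    (fun k => memLp_of_L2MOn (hpkL2 k) i j) (fun k => hT (P k) i j)
    (memLp_of_L2MOn hpL2 i j) (hT Q i j) ?_ ?_
  · intro h hm hh
    have hG := hpw (fun x a b => if a = i then (if b = j then h x else 0) else 0)
      (L2MOn_of_memLp ?_ ?_)
    · have em : ∀ (A : Mat n) (x : RV n),
          mdot A (fun a b => if a = i then (if b = j then h x else 0) else 0)
            = A i j * h x := by
        intro A x
        unfold mdot
        rw [Finset.sum_eq_single i, Finset.sum_eq_single j]
        · simp
        · intro b _ hb
          simp [hb]
        · simp
        · intro b _ hb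
          simp [hb]
        · simp
      simp only [em] at hG
      exact hG
    · intro a b
      by_cases ha : a = i <;> by_cases hb : b = j <;> simp [ha, hb, hm]
    · intro a b
      by_cases ha : a = i <;> by_cases hb : b = j <;> simp [ha, hb, hh]
  · have hlim : Tendsto (fun k => N ^ 2 * ∫ x, ∑ l, ((P k).u x l - Q.u x l) ^ 2) atTop (𝓝 0) := by
      simpa using hstrong.const_mul (N ^ 2)
    refine squeeze_zero (fun k => integral_nonneg fun x => sq_nonneg _) (fun k => ?_) hlim
    have hint : Integrable (fun x => N ^ 2 * ∑ l, ((P k).u x l - Q.u x l) ^ 2) volume := by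
      refine Integrable.const_mul (integrable_finsetSum _ fun l _ => ?_) _
      have h1 := (memLp_of_L2VOn (P k).hu l).sub (memLp_of_L2VOn Q.hu l)
      rw [Measure.restrict_univ] at h1
      exact h1.integrable_sq
    rw [← integral_const_mul]
    refine le_trans (integral_mono ?_ hint.restrict
      fun x => symT_sub_sq hN (P k).u Q.u i j x) ?_
    · exact ((hT (P k) i j).sub (hT Q i j)).integrable_sq
    · refine setIntegral_le_integral hint (Eventually.of_forall fun x => ?_)
      exact mul_nonneg (sq_nonneg _) (Finset.sum_nonneg fun l _ => sq_nonneg _)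
end
end

section
/- Let χ_a^k, χ_b^k : Ω → {0,1} be measurable with χ_a^k + χ_b^k = 1 a.e. in Ω, set ψ^k := χ_b^k − χ_a^k, and assume ψ^k → ψ weak* in L^∞(Ω). Let E^k → E and p^k → p weakly in L²(Ω; Sym(n)), and assume p^k = (χ_a^k a + χ_b^k b) E^k + A⁺ + ψ^k A⁻ a.e. in Ω for every k. For fields F, q ∈ L²(Ω; Sym(n)) and a measurable t : Ω → ℝ define, on Ω ∖ Ω₀, G(F, q, t) := (ab(C−D)/(b−a))·F + ((bD−aC)/(b−a))·q + ab(|C|²−|D|²)/(2(b−a)) − t · ab|C−D|²/(2(b−a)). Then G(E^k, p^k, ψ^k) is integrable on Ω ∖ Ω₀ for each k, G(E, p, ψ) is integrable on Ω ∖ Ω₀, and ∫_{Ω∖Ω₀} G(E^k, p^k, ψ^k) dx → ∫_{Ω∖Ω₀} G(E, p, ψ) dx as k → ∞. -/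
open MeasureTheory Filter Topology

noncomputable section

lemma integral_mono_of_le_abs {α : Type*} [MeasurableSpace α] {μ : Measure α} {f φ : α → ℝ}
    (hf : Integrable f μ) (hφ : Measurable φ) (hφ1 : ∀ x, |φ x| ≤ 1) :
    ∫ x, f x * φ x ∂μ ≤ ∫ x, |f x| ∂μ := by
  refine integral_mono (hf.mul_bdd (c := 1) hφ.aestronglyMeasurable
    (Eventually.of_forall hφ1)) hf.abs fun x => ?_
  calc f x * φ x ≤ |f x * φ x| := le_abs_self _
    _ = |f x| * |φ x| := abs_mul _ _
    _ ≤ |f x| * 1 := by gcongr; exact hφ1 x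
    _ = |f x| := mul_one _

lemma aux_key {α : Type*} [MeasurableSpace α] (μ : Measure α) [IsFiniteMeasure μ]
    (gk : ℕ → α → ℝ) (g : α → ℝ) (V : ℕ → Set α) (hV : AECover μ atTop V)
    (hgk : ∀ k, Integrable (gk k) μ) (hgm : Measurable g)
    (hint : ∀ m, IntegrableOn g (V m) μ)
    (hlim : ∀ m, ∀ φ : α → ℝ, Measurable φ → (∀ x, |φ x| ≤ 1) →
      Tendsto (fun k => ∫ x in V m, gk k x * φ x ∂μ) atTop (𝓝 (∫ x in V m, g x * φ x ∂μ)))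
    (hUI : ∀ η : ℝ, 0 < η → ∃ L : ℝ, ∀ k, ∀ A : Set α, MeasurableSet A →
      ∫ x in A, |gk k x| ∂μ ≤ η + L * μ.real A) :
    Integrable g μ ∧ Tendsto (fun k => ∫ x, gk k x ∂μ) atTop (𝓝 (∫ x, g x ∂μ)) := by
  have hg : Integrable g μ := by
    obtain ⟨L, hL⟩ := hUI 1 one_pos
    refine hV.integrable_of_integral_norm_bounded (1 + |L| * μ.real Set.univ) hint ?_
    refine Eventually.of_forall fun m => ?_
    set φ : α → ℝ := fun x => if 0 ≤ g x then 1 else -1 with hφ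
    have hφm : Measurable φ :=
      Measurable.ite (measurableSet_le measurable_const hgm) measurable_const measurable_const
    have hφ1 : ∀ x, |φ x| ≤ 1 := by
      intro x; simp only [hφ]; split_ifs <;> simp
    have hgφ : ∀ x, g x * φ x = ‖g x‖ := by
      intro x; simp only [hφ, Real.norm_eq_abs]; split_ifs with h
      · rw [abs_of_nonneg h, mul_one]
      · rw [abs_of_neg (not_le.mp h)]; ring
    have ht := hlim m φ hφm hφ1
    simp only [hgφ] at ht
    refine le_of_tendsto ht (Eventually.of_forall fun k => ?_)
    calc ∫ x in V m, gk k x * φ x ∂μ ≤ ∫ x in V m, |gk k x| ∂μ := by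
          refine integral_mono_of_le_abs (hgk k).integrableOn hφm hφ1
      _ ≤ 1 + L * μ.real (V m) := hL k _ (hV.measurableSet m)
      _ ≤ 1 + |L| * μ.real Set.univ := by
          have h1 : L * μ.real (V m) ≤ |L| * μ.real (V m) :=
            mul_le_mul_of_nonneg_right (le_abs_self L) measureReal_nonneg
          have h2 : |L| * μ.real (V m) ≤ |L| * μ.real Set.univ :=
            mul_le_mul_of_nonneg_left (measureReal_mono (Set.subset_univ _)) (abs_nonneg L)
          linarith
  refine ⟨hg, ?_⟩
  rw [Metric.tendsto_atTop]
  intro ε hε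
  obtain ⟨L, hL⟩ := hUI (ε/8) (by positivity)
  have h1 := hV.integral_tendsto_of_countably_generated hg
  have h2 := hV.integral_tendsto_of_countably_generated (integrable_const (1:ℝ))
  simp only [integral_const, MeasurableSet.univ, measureReal_restrict_apply, Set.univ_inter,
    smul_eq_mul, mul_one] at h2
  have h3 : Tendsto (fun m => L * (μ.real Set.univ - μ.real (V m))) atTop (𝓝 0) := by
    have := (h2.const_sub (μ.real Set.univ)).const_mul L
    simpa using this
  have e1 := (Metric.tendsto_nhds.mp h1) (ε/4) (by positivity)
  have e3 := h3.eventually (gt_mem_nhds (show (0:ℝ) < ε/8 by positivity))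
  obtain ⟨m, hm1, hm3⟩ := (e1.and e3).exists
  have ht := hlim m (fun _ => 1) measurable_const (by simp)
  simp only [mul_one] at ht
  obtain ⟨N, hN⟩ := (Metric.tendsto_atTop.mp ht) (ε/4) (by positivity)
  refine ⟨N, fun k hk => ?_⟩
  have hVm := hV.measurableSet m
  have hk1 := hN k hk
  have hs := integral_add_compl hVm (hgk k)
  have hc := hL k _ hVm.compl
  rw [measureReal_compl hVm] at hc
  have hc' : |∫ x in (V m)ᶜ, gk k x ∂μ| ≤ ∫ x in (V m)ᶜ, |gk k x| ∂μ :=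
    abs_integral_le_integral_abs
  rw [Real.dist_eq] at *
  rw [← hs]
  rw [abs_lt] at *
  rw [abs_le] at hc'
  constructor <;> linarith [hc'.1, hc'.2, hk1.1, hk1.2, hm1.1, hm1.2]

lemma aux_bdd {α : Type*} [MeasurableSpace α] (μ : Measure α)
    (fk : ℕ → α → ℝ) (f : α → ℝ) (hfk : ∀ k, MemLp (fk k) 2 μ)
    (hw : ∀ g : α → ℝ, Measurable g → MemLp g 2 μ →
      Tendsto (fun k => ∫ x, fk k x * g x ∂μ) atTop (𝓝 (∫ x, f x * g x ∂μ))) :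
    ∃ K : ℝ, ∀ k, ∫ x, fk k x * fk k x ∂μ ≤ K := by
  have key : ∃ K, ∀ k, ‖innerSL ℝ ((hfk k).toLp (fk k))‖ ≤ K := by
    apply banach_steinhaus
    intro u
    have hum := Lp.aestronglyMeasurable u
    have hu : MemLp (hum.mk u) 2 μ := (memLp_congr_ae hum.ae_eq_mk).mp (Lp.memLp u)
    have ht := hw _ hum.stronglyMeasurable_mk.measurable hu
    obtain ⟨B, hB⟩ := (ht.norm).bddAbove_range
    refine ⟨B, fun k => ?_⟩
    have := hB ⟨k, rfl⟩
    simp only at this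
    refine le_trans (le_of_eq ?_) this
    congr 1
    rw [innerSL_apply_apply, L2.inner_def]
    refine integral_congr_ae ?_
    filter_upwards [hum.ae_eq_mk, (hfk k).coeFn_toLp] with x h1 h2
    rw [h1, h2]; simp [mul_comm]
  obtain ⟨K, hK⟩ := key
  refine ⟨K * K, fun k => ?_⟩
  have hk := hK k
  rw [innerSL_apply_norm] at hk
  have : ∫ x, fk k x * fk k x ∂μ = ‖(hfk k).toLp (fk k)‖ * ‖(hfk k).toLp (fk k)‖ := by
    rw [← real_inner_self_eq_norm_mul_norm, L2.inner_def]
    refine integral_congr_ae ?_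
    filter_upwards [(hfk k).coeFn_toLp] with x h2
    rw [h2]; simp [pow_two]
  rw [this]
  exact mul_le_mul hk hk (norm_nonneg _) ((norm_nonneg _).trans hk)

lemma linf_const {n : ℕ} {s : Set (RV n)} (c : ℝ) : LinfROn (fun _ => c) s :=
  ⟨measurable_const, |c|, Eventually.of_forall fun _ _ => le_rfl⟩

lemma linf_mul {n : ℕ} {s : Set (RV n)} {f g : RV n → ℝ} (hf : LinfROn f s) (hg : LinfROn g s) :
    LinfROn (fun x => f x * g x) s := by
  obtain ⟨hf, M, hM⟩ := hf
  obtain ⟨hg, N, hN⟩ := hg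
  refine ⟨hf.mul hg, |M| * |N|, ?_⟩
  filter_upwards [hM, hN] with x h1 h2 hx
  rw [abs_mul]
  exact mul_le_mul ((h1 hx).trans (le_abs_self _)) ((h2 hx).trans (le_abs_self _))
    (abs_nonneg _) (abs_nonneg _)

lemma linf_add {n : ℕ} {s : Set (RV n)} {f g : RV n → ℝ} (hf : LinfROn f s) (hg : LinfROn g s) :
    LinfROn (fun x => f x + g x) s := by
  obtain ⟨hf, M, hM⟩ := hf
  obtain ⟨hg, N, hN⟩ := hg
  refine ⟨hf.add hg, M + N, ?_⟩
  filter_upwards [hM, hN] with x h1 h2 hx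
  exact (abs_add_le _ _).trans (add_le_add (h1 hx) (h2 hx))

lemma linf_sub {n : ℕ} {s : Set (RV n)} {f g : RV n → ℝ} (hf : LinfROn f s) (hg : LinfROn g s) :
    LinfROn (fun x => f x - g x) s := by
  have := linf_add hf (linf_mul (linf_const (-1)) hg)
  simpa [sub_eq_add_neg] using this

lemma linf_sum {n : ℕ} {s : Set (RV n)} {ι : Type*} (t : Finset ι) {f : ι → RV n → ℝ}
    (hf : ∀ i, LinfROn (f i) s) : LinfROn (fun x => ∑ i ∈ t, f i x) s := by
  classical
  induction t using Finset.induction_on with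
  | empty => simpa using linf_const 0
  | insert i t hi ih =>
    simp only [Finset.sum_insert hi]
    exact linf_add (hf i) ih

lemma linf_integrable {n : ℕ} {s : Set (RV n)} (hs : MeasurableSet s) (hv : volume s ≠ ⊤)
    {f : RV n → ℝ} (hf : LinfROn f s) : IntegrableOn f s volume := by
  obtain ⟨hf, M, hM⟩ := hf
  refine Measure.integrableOn_of_bounded (M := M) hv hf.aestronglyMeasurable ?_
  rw [ae_restrict_iff' hs]
  exact hM

lemma linfM_entry {n : ℕ} {s : Set (RV n)} {C : MField n} (hC : LinfMOn C s) (i j : Fin n) :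
    LinfROn (fun x => C x i j) s := by
  obtain ⟨h, M, hM⟩ := hC
  exact ⟨h i j, M, by filter_upwards [hM] with x hx hs using hx hs i j⟩

lemma linf_mdot {n : ℕ} {s : Set (RV n)} {C D : MField n}
    (hC : ∀ i j, LinfROn (fun x => C x i j) s) (hD : ∀ i j, LinfROn (fun x => D x i j) s) :
    LinfROn (fun x => mdot (C x) (D x)) s :=
  linf_sum _ fun i => linf_sum _ fun j => linf_mul (hC i j) (hD i j)

lemma l2_of_linf {n : ℕ} {s : Set (RV n)} (hs : MeasurableSet s) (hv : volume s ≠ ⊤)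
    {C : MField n} (hC : ∀ i j, LinfROn (fun x => C x i j) s) : L2MOn C s :=
  ⟨fun i j => (hC i j).1, linf_integrable hs hv (linf_mdot hC hC)⟩

lemma measurable_mdot {n : ℕ} {C D : MField n}
    (hC : ∀ i j, Measurable (fun x => C x i j)) (hD : ∀ i j, Measurable (fun x => D x i j)) :
    Measurable (fun x => mdot (C x) (D x)) :=
  Finset.measurable_sum _ fun i _ => Finset.measurable_sum _ fun j _ => (hC i j).mul (hD i j)

lemma mdot_self_nonneg {n : ℕ} (P : Mat n) : 0 ≤ mdot P P :=
  Finset.sum_nonneg fun _ _ => Finset.sum_nonneg fun _ _ => mul_self_nonneg _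

lemma mdot_young {n : ℕ} (P Q : Mat n) {η : ℝ} (hη : 0 < η) :
    |mdot P Q| ≤ η * mdot Q Q + (4 * η)⁻¹ * mdot P P := by
  unfold mdot
  rw [Finset.mul_sum, Finset.mul_sum, ← Finset.sum_add_distrib]
  refine (Finset.abs_sum_le_sum_abs _ _).trans (Finset.sum_le_sum fun i _ => ?_)
  rw [Finset.mul_sum, Finset.mul_sum, ← Finset.sum_add_distrib]
  refine (Finset.abs_sum_le_sum_abs _ _).trans (Finset.sum_le_sum fun j _ => ?_)
  rw [abs_mul, ← abs_mul_abs_self (Q i j), ← abs_mul_abs_self (P i j)]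
  set u := |P i j|
  set v := |Q i j|
  have : η * (v * v) + (4 * η)⁻¹ * (u * u) - u * v = η * (v - u / (2 * η)) ^ 2 := by
    field_simp; ring
  have h2 : 0 ≤ η * (v - u / (2 * η)) ^ 2 := by positivity
  linarith

lemma integrable_mdot {n : ℕ} {s : Set (RV n)} {F H : MField n} (hF : L2MOn F s)
    (hH : L2MOn H s) : IntegrableOn (fun x => mdot (F x) (H x)) s volume := by
  refine Integrable.mono' ((hH.2.const_mul 1).add (hF.2.const_mul (4 * 1)⁻¹))
    (measurable_mdot hF.1 hH.1).aestronglyMeasurable (Eventually.of_forall fun x => ?_)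
  exact mdot_young _ _ one_pos

lemma l2_entry {n : ℕ} {s : Set (RV n)} {F : MField n} (hF : L2MOn F s) (i j : Fin n) :
    IntegrableOn (fun x => F x i j * F x i j) s volume := by
  refine Integrable.mono' hF.2 ((hF.1 i j).mul (hF.1 i j)).aestronglyMeasurable
    (Eventually.of_forall fun x => ?_)
  rw [Real.norm_eq_abs, abs_of_nonneg (mul_self_nonneg _)]
  refine le_trans ?_ (Finset.single_le_sum (f := fun i => ∑ j, F x i j * F x i j)
    (fun _ _ => Finset.sum_nonneg fun _ _ => mul_self_nonneg _) (Finset.mem_univ i))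
  exact Finset.single_le_sum (f := fun j => F x i j * F x i j)
    (fun _ _ => mul_self_nonneg _) (Finset.mem_univ j)

lemma weak_bdd {n : ℕ} {s : Set (RV n)} {pk : ℕ → MField n} {p : MField n}
    (hpk : ∀ k, L2MOn (pk k) s) (hw : WeakL2M pk p s) :
    ∃ K : ℝ, ∀ k, ∫ x in s, mdot (pk k x) (pk k x) ≤ K := by
  have h : ∀ i j, ∃ K : ℝ, ∀ k, ∫ x in s, pk k x i j * pk k x i j ≤ K := by
    intro i j
    refine aux_bdd (volume.restrict s) (fun k x => pk k x i j) (fun x => p x i j) ?_ ?_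
    · intro k
      rw [memLp_two_iff_integrable_sq ((hpk k).1 i j).aestronglyMeasurable]
      simp only [pow_two]
      exact l2_entry (hpk k) i j
    · intro g hgm hg
      rw [memLp_two_iff_integrable_sq hgm.aestronglyMeasurable] at hg
      have hd : ∀ (P : Mat n) (r : ℝ), mdot P (Matrix.single i j r) = P i j * r := by
        intro P r
        unfold mdot
        rw [Finset.sum_eq_single i, Finset.sum_eq_single j]
        · simp
        · intro l _ hl; simp [Matrix.single_apply, hl.symm]
        · simp
        · intro l _ hl
          refine Finset.sum_eq_zero fun m _ => ?_
          simp [Matrix.single_apply, hl.symm]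
        · simp
      have := hw (fun x => Matrix.single i j (g x)) ⟨?_, ?_⟩
      · simpa only [hd] using this
      · intro i' j'
        by_cases h : i = i' ∧ j = j'
        · simpa [Matrix.single_apply, h] using hgm
        · simp [Matrix.single_apply, h]
      · simp only [hd, Matrix.single_apply_same]
        simp only [pow_two] at hg
        exact hg
  choose K hK using h
  refine ⟨∑ i, ∑ j, K i j, fun k => ?_⟩
  unfold mdot
  rw [integral_finsetSum _ fun i _ => integrable_finsetSum _ fun j _ => l2_entry (hpk k) i j]
  refine Finset.sum_le_sum fun i _ => ?_
  rw [integral_finsetSum _ fun j _ => l2_entry (hpk k) i j]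
  exact Finset.sum_le_sum fun j _ => hK i j k

/-- `(b - a)` times the integrand `Goff`. -/
def Nfun {n : ℕ} (a b : RV n → ℝ) (C D : MField n) (F q : MField n) (t : RV n → ℝ)
    (x : RV n) : ℝ :=
  a x * b x * mdot (C x - D x) (F x) + mdot (b x • D x - a x • C x) (q x) +
    a x * b x * (mdot (C x) (C x) - mdot (D x) (D x)) / 2 -
    t x * (a x * b x * mdot (C x - D x) (C x - D x) / 2)

lemma Nfun_eq {n : ℕ} (a b : RV n → ℝ) (C D : MField n) (F q : MField n) (t : RV n → ℝ)
    (w : RV n → ℝ) (x : RV n) :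
    w x * Nfun a b C D F q t x =
      mdot (F x) ((w x * a x * b x) • (C x - D x)) +
      mdot (q x) (w x • (b x • D x - a x • C x)) +
      w x * a x * b x * (mdot (C x) (C x) - mdot (D x) (D x)) * 2⁻¹ -
      t x * (w x * a x * b x * mdot (C x - D x) (C x - D x) * 2⁻¹) := by
  have e : ∀ (r : ℝ) (P Q : Mat n), mdot P (r • Q) = r * mdot Q P := by
    intro r P Q
    unfold mdot
    simp only [Finset.mul_sum, Matrix.smul_apply, smul_eq_mul]
    exact Finset.sum_congr rfl fun i _ => Finset.sum_congr rfl fun j _ => by ring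
  rw [e, e]
  unfold Nfun
  ring

lemma Nfun_int {n : ℕ} {s : Set (RV n)} (hs : MeasurableSet s) (hv : volume s ≠ ⊤)
    {a b w : RV n → ℝ} (ha : LinfROn a s) (hb : LinfROn b s) (hw : LinfROn w s)
    {C D : MField n} (hC : LinfMOn C s) (hD : LinfMOn D s) :
    (∀ {F q : MField n} {t : RV n → ℝ}, L2MOn F s → L2MOn q s → LinfROn t s →
      IntegrableOn (fun x => w x * Nfun a b C D F q t x) s volume) ∧
    (∀ {Fk qk : ℕ → MField n} {tk : ℕ → RV n → ℝ} {F q : MField n} {t : RV n → ℝ},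
      (∀ k, L2MOn (Fk k) s) → (∀ k, L2MOn (qk k) s) → (∀ k, LinfROn (tk k) s) →
      L2MOn F s → L2MOn q s → LinfROn t s → WeakL2M Fk F s → WeakL2M qk q s →
      WeakStarLinf tk t s →
      Tendsto (fun k => ∫ x in s, w x * Nfun a b C D (Fk k) (qk k) (tk k) x) atTop
        (𝓝 (∫ x in s, w x * Nfun a b C D F q t x))) := by
  have hC' := linfM_entry hC
  have hD' := linfM_entry hD
  have hCD : ∀ i j, LinfROn (fun x => (C x - D x) i j) s := fun i j => linf_sub (hC' i j) (hD' i j)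
  have hH1 : L2MOn (fun x => (w x * a x * b x) • (C x - D x)) s :=
    l2_of_linf hs hv fun i j => linf_mul (linf_mul (linf_mul hw ha) hb) (hCD i j)
  have hH2 : L2MOn (fun x => w x • (b x • D x - a x • C x)) s :=
    l2_of_linf hs hv fun i j => linf_mul hw
      (linf_sub (linf_mul hb (hD' i j)) (linf_mul ha (hC' i j)))
  have h3 : LinfROn (fun x => w x * a x * b x * (mdot (C x) (C x) - mdot (D x) (D x)) * 2⁻¹) s :=
    linf_mul (linf_mul (linf_mul (linf_mul hw ha) hb)
      (linf_sub (linf_mdot hC' hC') (linf_mdot hD' hD'))) (linf_const _)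
  have h4 : LinfROn (fun x => w x * a x * b x * mdot (C x - D x) (C x - D x) * 2⁻¹) s :=
    linf_mul (linf_mul (linf_mul (linf_mul hw ha) hb) (linf_mdot hCD hCD)) (linf_const _)
  have i3 := linf_integrable hs hv h3
  simp only [Nfun_eq]
  have hI : ∀ {F q : MField n} {t : RV n → ℝ}, L2MOn F s → L2MOn q s → LinfROn t s →
      ∫ x in s, (mdot (F x) ((w x * a x * b x) • (C x - D x)) +
      mdot (q x) (w x • (b x • D x - a x • C x)) +
      w x * a x * b x * (mdot (C x) (C x) - mdot (D x) (D x)) * 2⁻¹ -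
      t x * (w x * a x * b x * mdot (C x - D x) (C x - D x) * 2⁻¹)) =
      (∫ x in s, mdot (F x) ((w x * a x * b x) • (C x - D x))) +
      (∫ x in s, mdot (q x) (w x • (b x • D x - a x • C x))) +
      (∫ x in s, w x * a x * b x * (mdot (C x) (C x) - mdot (D x) (D x)) * 2⁻¹) -
      (∫ x in s, t x * (w x * a x * b x * mdot (C x - D x) (C x - D x) * 2⁻¹)) := by
    intro F q t hF hq ht
    have i1 := integrable_mdot hF hH1
    have i2 := integrable_mdot hq hH2
    rw [integral_sub, integral_add, integral_add]
    · exact i1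
    · exact i2
    · exact i1.add i2
    · exact i3
    · exact (i1.add i2).add i3
    · exact linf_integrable hs hv (linf_mul ht h4)
  refine ⟨?_, ?_⟩
  · intro F q t hF hq ht
    exact (((integrable_mdot hF hH1).add (integrable_mdot hq hH2)).add i3).sub
      (linf_integrable hs hv (linf_mul ht h4))
  · intro Fk qk tk F q t hFk hqk htk hF hq ht wF wq wt
    rw [hI hF hq ht]
    simp only [fun k => hI (hFk k) (hqk k) (htk k)]
    exact (((wF _ hH1).add (wq _ hH2)).add tendsto_const_nhds).sub
      (wt _ (linf_integrable hs hv h4))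

lemma mdot_comm' {n : ℕ} (P Q : Mat n) : mdot P Q = mdot Q P := by
  unfold mdot; simp only [mul_comm]

lemma mdot_add_right' {n : ℕ} (P Q S : Mat n) : mdot P (Q + S) = mdot P Q + mdot P S := by
  unfold mdot; simp only [Matrix.add_apply, mul_add, Finset.sum_add_distrib]

lemma mdot_sub_right' {n : ℕ} (P Q S : Mat n) : mdot P (Q - S) = mdot P Q - mdot P S := by
  unfold mdot; simp only [Matrix.sub_apply, mul_sub, Finset.sum_sub_distrib]

lemma mdot_smul_right' {n : ℕ} (r : ℝ) (P Q : Mat n) : mdot P (r • Q) = r * mdot P Q := by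
  unfold mdot
  simp only [Finset.mul_sum, Matrix.smul_apply, smul_eq_mul]
  exact Finset.sum_congr rfl fun i _ => Finset.sum_congr rfl fun j _ => by ring

lemma mdot_sub_left' {n : ℕ} (P Q S : Mat n) : mdot (Q - S) P = mdot Q P - mdot S P := by
  rw [mdot_comm', mdot_sub_right', mdot_comm' P, mdot_comm' P]

lemma mdot_smul_left' {n : ℕ} (r : ℝ) (P Q : Mat n) : mdot (r • Q) P = r * mdot Q P := by
  rw [mdot_comm', mdot_smul_right', mdot_comm' P]

lemma Goff_b {n : ℕ} {a b t : RV n → ℝ} {C D F q : MField n} {x : RV n}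
    (h : b x - a x ≠ 0) (hq : q x = b x • F x + b x • D x) (ht : t x = 1) :
    Goff a b C D F q t x = mdot (D x) (q x) := by
  unfold Goff
  rw [hq, ht]
  simp only [mdot_sub_left', mdot_smul_left', mdot_add_right', mdot_sub_right', mdot_smul_right']
  rw [mdot_comm' (D x) (C x)]
  field_simp
  ring

lemma Goff_a {n : ℕ} {a b t : RV n → ℝ} {C D F q : MField n} {x : RV n}
    (h : b x - a x ≠ 0) (hq : q x = a x • F x + a x • C x) (ht : t x = -1) :
    Goff a b C D F q t x = mdot (C x) (q x) := by
  unfold Goff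
  rw [hq, ht]
  simp only [mdot_sub_left', mdot_smul_left', mdot_add_right', mdot_sub_right', mdot_smul_right']
  rw [mdot_comm' (D x) (C x)]
  field_simp
  ring

/-- passage to the limit in the integrals over `Ω \ Ω₀`, where the
coefficients contain the possibly unbounded factor `1/(b−a)`. -/
theorem statement9 {n : ℕ} (Ω : Set (RV n)) (hΩo : IsOpen Ω)
    (hΩb : Bornology.IsBounded Ω)
    (δ : ℝ) (hδ : 0 < δ)
    (a b : RV n → ℝ) (ha : LinfROn a Ω) (hb : LinfROn b Ω)
    (haδ : ∀ᵐ x ∂(volume : Measure (RV n)), x ∈ Ω → δ ≤ a x)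
    (hbδ : ∀ᵐ x ∂(volume : Measure (RV n)), x ∈ Ω → δ ≤ b x)
    (C D : MField n) (hC : LinfMOn C Ω) (hD : LinfMOn D Ω)
    (χak χbk : ℕ → RV n → ℝ)
    (hχam : ∀ k, Measurable (χak k)) (hχbm : ∀ k, Measurable (χbk k))
    (hχav : ∀ k x, χak k x = 0 ∨ χak k x = 1)
    (hχbv : ∀ k x, χbk k x = 0 ∨ χbk k x = 1)
    (hχsum : ∀ k, ∀ᵐ x ∂(volume : Measure (RV n)), x ∈ Ω → χak k x + χbk k x = 1)
    (ψ : RV n → ℝ) (hψm : Measurable ψ)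
    (hψb : ∀ᵐ x ∂(volume : Measure (RV n)), x ∈ Ω → |ψ x| ≤ 1)
    (hψw : WeakStarLinf (fun k x => χbk k x - χak k x) ψ Ω)
    (Ek : ℕ → MField n) (E : MField n)
    (hEkL2 : ∀ k, L2MOn (Ek k) Ω) (hEL2 : L2MOn E Ω)
    (hEw : WeakL2M Ek E Ω)
    (pk : ℕ → MField n) (p : MField n)
    (hpkL2 : ∀ k, L2MOn (pk k) Ω) (hpL2 : L2MOn p Ω)
    (hpw : WeakL2M pk p Ω)
    (hpkdef : ∀ k, ∀ᵐ x ∂(volume : Measure (RV n)), x ∈ Ω →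
      pk k x = (χak k x * a x + χbk k x * b x) • Ek k x + Aplus a b C D x
        + (χbk k x - χak k x) • Aminus a b C D x) :
    (∀ k, IntegrableOn
      (Goff a b C D (Ek k) (pk k) (fun y => χbk k y - χak k y))
      (Ω \ Omega0 Ω a b) volume) ∧
    IntegrableOn (Goff a b C D E p ψ) (Ω \ Omega0 Ω a b) volume ∧
    Tendsto (fun k => ∫ x in Ω \ Omega0 Ω a b,
        Goff a b C D (Ek k) (pk k) (fun y => χbk k y - χak k y) x) atTop
      (𝓝 (∫ x in Ω \ Omega0 Ω a b, Goff a b C D E p ψ x)) := by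
  classical
  have hs : MeasurableSet Ω := hΩo.measurableSet
  have hv : volume Ω ≠ ⊤ := hΩb.measure_lt_top.ne
  have h0m : MeasurableSet (Omega0 Ω a b) := hs.inter (measurableSet_eq_fun ha.1 hb.1)
  set U := Ω \ Omega0 Ω a b with hU
  have hUm : MeasurableSet U := hs.diff h0m
  have hUΩ : U ⊆ Ω := Set.diff_subset
  have hUne : ∀ x ∈ U, b x - a x ≠ 0 := by
    intro x hx h
    exact hx.2 ⟨hx.1, by linarith⟩
  have hvU : volume U ≠ ⊤ := ((measure_mono hUΩ).trans_lt hv.lt_top).ne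
  haveI : IsFiniteMeasure (volume.restrict U) := ⟨by simpa using hvU.lt_top⟩
  have htk : ∀ k, LinfROn (fun x => χbk k x - χak k x) Ω := by
    intro k
    refine ⟨(hχbm k).sub (hχam k), 1, Eventually.of_forall fun x _ => ?_⟩
    rcases hχav k x with h | h <;> rcases hχbv k x with h' | h' <;> simp [h, h']
  have ht : LinfROn ψ Ω := ⟨hψm, 1, hψb⟩
  -- the simplified form of the integrand
  have hC' := linfM_entry hC
  have hD' := linfM_entry hD
  let R : ℕ → MField n := fun k x => χbk k x • D x + χak k x • C x
  have hR : ∀ k i j, Measurable fun x => R k x i j := fun k i j =>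
    ((hχbm k).mul (hD.1 i j)).add ((hχam k).mul (hC.1 i j))
  have hGk : ∀ k, ∀ᵐ x ∂(volume : Measure (RV n)), x ∈ U →
      Goff a b C D (Ek k) (pk k) (fun y => χbk k y - χak k y) x = mdot (R k x) (pk k x) := by
    intro k
    filter_upwards [hpkdef k, hχsum k] with x hp hsum hx
    have hp := hp (hUΩ hx)
    have hsum := hsum (hUΩ hx)
    rcases hχav k x with h | h
    · have h' : χbk k x = 1 := by linarith
      have hp2 : pk k x = b x • Ek k x + b x • D x := by
        rw [hp, h, h']; unfold Aplus Aminus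
        ext i j
        simp only [Matrix.add_apply, Matrix.smul_apply, Matrix.sub_apply, smul_eq_mul]
        ring
      rw [show R k x = D x by simp [R, h, h']]
      exact Goff_b (hUne x hx) hp2 (by simp [h, h'])
    · have h' : χbk k x = 0 := by linarith
      have hp2 : pk k x = a x • Ek k x + a x • C x := by
        rw [hp, h, h']; unfold Aplus Aminus
        ext i j
        simp only [Matrix.add_apply, Matrix.smul_apply, Matrix.sub_apply, smul_eq_mul]
        ring
      rw [show R k x = C x by simp [R, h, h']]
      exact Goff_a (hUne x hx) hp2 (by simp [h, h'])
  obtain ⟨-, MC, hMC⟩ := linf_mdot hC' hC'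
  obtain ⟨-, MD, hMD⟩ := linf_mdot hD' hD'
  have hRb : ∀ k, ∀ᵐ x ∂(volume : Measure (RV n)), x ∈ U →
      mdot (R k x) (R k x) ≤ |MC| + |MD| := by
    intro k
    filter_upwards [hMC, hMD, hχsum k] with x h1 h2 hsum hx
    have hsum := hsum (hUΩ hx)
    have h1 := (le_abs_self _).trans (h1 (hUΩ hx))
    have h2 := (le_abs_self _).trans (h2 (hUΩ hx))
    have g1 := le_abs_self MC
    have g2 := le_abs_self MD
    have g3 := abs_nonneg MC
    have g4 := abs_nonneg MD
    rcases hχav k x with h | h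
    · have h' : χbk k x = 1 := by linarith
      rw [show R k x = D x by simp [R, h, h']]
      linarith
    · have h' : χbk k x = 0 := by linarith
      rw [show R k x = C x by simp [R, h, h']]
      linarith
  have hbd : ∀ k, ∀ η : ℝ, 0 < η → ∀ᵐ x ∂(volume.restrict U),
      |Goff a b C D (Ek k) (pk k) (fun y => χbk k y - χak k y) x| ≤
        η * mdot (pk k x) (pk k x) + (4 * η)⁻¹ * (|MC| + |MD|) := by
    intro k η hη
    rw [ae_restrict_iff' hUm]
    filter_upwards [hGk k, hRb k] with x h1 h2 hx
    rw [h1 hx]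
    refine (mdot_young _ _ hη).trans ?_
    have := h2 hx
    gcongr
  have hGm : ∀ {F q : MField n} {t : RV n → ℝ}, L2MOn F Ω → L2MOn q Ω → Measurable t →
      Measurable (Goff a b C D F q t) := by
    intro F q t hF hq ht
    have hba := hb.1.sub ha.1
    have hab := ha.1.mul hb.1
    have hCD : ∀ i j, Measurable (fun x => (C x - D x) i j) :=
      fun i j => (hC.1 i j).sub (hD.1 i j)
    have hDC : ∀ i j, Measurable (fun x => (b x • D x - a x • C x) i j) :=
      fun i j => (hb.1.mul (hD.1 i j)).sub (ha.1.mul (hC.1 i j))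
    exact ((((hab.div hba).mul (measurable_mdot hCD hF.1)).add
      (hba.inv.mul (measurable_mdot hDC hq.1))).add
      ((hab.mul ((measurable_mdot hC.1 hC.1).sub (measurable_mdot hD.1 hD.1))).div
        (hba.const_mul 2))).sub
      (ht.mul ((hab.mul (measurable_mdot hCD hCD)).div (hba.const_mul 2)))
  have hGint : ∀ k, IntegrableOn
      (Goff a b C D (Ek k) (pk k) (fun y => χbk k y - χak k y)) U volume := by
    intro k
    refine Integrable.mono' ((((hpkL2 k).2.mono_set hUΩ).const_mul 1).add
      (integrable_const ((4 * 1)⁻¹ * (|MC| + |MD|))))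
      (hGm (hEkL2 k) (hpkL2 k) (htk k).1).aestronglyMeasurable ?_
    exact hbd k 1 one_pos
  let V : ℕ → Set (RV n) := fun m => {x | 1 / ((m : ℝ) + 1) ≤ |b x - a x|}
  have hVm : ∀ m, MeasurableSet (V m) := fun m =>
    measurableSet_le measurable_const (hb.1.sub ha.1).abs
  have hVcov : AECover (volume.restrict U) atTop V := by
    refine aecover_restrict_of_ae_imp hUm (Eventually.of_forall fun x hx => ?_) hVm
    have h := tendsto_one_div_add_atTop_nhds_zero_nat (𝕜 := ℝ)
    have := h.eventually (gt_mem_nhds (abs_pos.mpr (hUne x hx)))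
    exact this.mono fun m hm => le_of_lt hm
  have hVpos : ∀ m x, x ∈ V m → b x - a x ≠ 0 := by
    intro m x hx h
    have hx : 1 / ((m : ℝ) + 1) ≤ |b x - a x| := hx
    rw [h, abs_zero] at hx
    have : 0 < 1 / ((m : ℝ) + 1) := by positivity
    linarith
  have hVU : ∀ m, Ω ∩ V m = V m ∩ U := by
    intro m
    ext x
    constructor
    · rintro ⟨h1, h2⟩
      exact ⟨h2, h1, fun h => hVpos m x h2 (by rw [h.2, sub_self])⟩
    · rintro ⟨h1, h2⟩
      exact ⟨hUΩ h2, h1⟩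
  -- the weights
  let W : ℕ → (RV n → ℝ) → RV n → ℝ := fun m φ => (V m).indicator fun x => φ x * (b x - a x)⁻¹
  have hW : ∀ m φ, Measurable φ → (∀ x, |φ x| ≤ 1) → LinfROn (W m φ) Ω := by
    intro m φ hφ hφ1
    refine ⟨(hφ.mul (hb.1.sub ha.1).inv).indicator (hVm m), (m : ℝ) + 1,
      Eventually.of_forall fun x _ => ?_⟩
    by_cases hx : x ∈ V m
    · simp only [W, Set.indicator_of_mem hx]
      have hx' : 1 / ((m : ℝ) + 1) ≤ |b x - a x| := hx
      rw [abs_mul, abs_inv]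
      have hp : (0 : ℝ) < (m : ℝ) + 1 := by positivity
      have : |b x - a x|⁻¹ ≤ (m : ℝ) + 1 := by
        rw [one_div] at hx'
        exact inv_le_of_inv_le₀ hp hx'
      calc |φ x| * |b x - a x|⁻¹ ≤ 1 * ((m : ℝ) + 1) := by
            gcongr
            exact hφ1 x
        _ = _ := one_mul _
    · simp only [W, Set.indicator_of_notMem hx, abs_zero]
      positivity
  have hWN : ∀ m φ (F q : MField n) (t : RV n → ℝ),
      (fun x => W m φ x * Nfun a b C D F q t x) =
        (V m).indicator (fun x => Goff a b C D F q t x * φ x) := by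
    intro m φ F q t
    funext x
    by_cases hx : x ∈ V m
    · simp only [W, Set.indicator_of_mem hx]
      have := hVpos m x hx
      unfold Nfun Goff
      field_simp
    · simp only [W, Set.indicator_of_notMem hx, zero_mul]
  have hWI : ∀ m φ (F q : MField n) (t : RV n → ℝ),
      ∫ x in V m, Goff a b C D F q t x * φ x ∂(volume.restrict U) =
        ∫ x in Ω, W m φ x * Nfun a b C D F q t x := by
    intro m φ F q t
    rw [hWN, setIntegral_indicator (hVm m), Measure.restrict_restrict (hVm m), hVU]
  have hkey := aux_key (volume.restrict U)
    (fun k => Goff a b C D (Ek k) (pk k) (fun y => χbk k y - χak k y))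
    (Goff a b C D E p ψ) V hVcov hGint (hGm hEL2 hpL2 hψm) ?_ ?_ ?_
  · exact ⟨hGint, hkey.1, hkey.2⟩
  · intro m
    have h := (Nfun_int hs hv ha hb (hW m (fun _ => 1) measurable_const (by simp)) hC hD).1
      hEL2 hpL2 ht
    rw [hWN, integrableOn_indicator_iff (hVm m), Set.inter_comm, hVU] at h
    simp only [mul_one] at h
    rw [IntegrableOn, Measure.restrict_restrict (hVm m)]
    exact h
  · intro m φ hφ hφ1
    simp only [hWI]
    exact (Nfun_int hs hv ha hb (hW m φ hφ hφ1) hC hD).2 hEkL2 hpkL2 htk hEL2 hpL2 ht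
      hEw hpw hψw
  · intro η hη
    obtain ⟨K, hK⟩ := weak_bdd hpkL2 hpw
    have hK1 : 0 < |K| + 1 := by positivity
    set c := η / (|K| + 1) with hc
    have hcp : 0 < c := div_pos hη hK1
    refine ⟨(4 * c)⁻¹ * (|MC| + |MD|), fun k A hA => ?_⟩
    have iP : IntegrableOn (fun x => mdot (pk k x) (pk k x)) A (volume.restrict U) :=
      Integrable.integrableOn ((hpkL2 k).2.mono_set hUΩ)
    have ic : IntegrableOn (fun _ : RV n => (4 * c)⁻¹ * (|MC| + |MD|)) A (volume.restrict U) :=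
      Integrable.integrableOn (integrable_const _)
    have h1 : ∫ x in A, |Goff a b C D (Ek k) (pk k) (fun y => χbk k y - χak k y) x|
          ∂(volume.restrict U) ≤
        ∫ x in A, (c * mdot (pk k x) (pk k x) + (4 * c)⁻¹ * (|MC| + |MD|))
          ∂(volume.restrict U) := by
      refine integral_mono_ae (hGint k).abs.integrableOn ((iP.const_mul c).add ic) ?_
      exact ae_restrict_of_ae (hbd k c hcp)
    rw [integral_add (iP.const_mul c) ic, integral_const_mul, setIntegral_const] at h1
    have h2 : ∫ x in A, mdot (pk k x) (pk k x) ∂(volume.restrict U) ≤ K := by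
      refine le_trans ?_ (hK k)
      rw [Measure.restrict_restrict hA]
      exact setIntegral_mono_set (hpkL2 k).2
        (Eventually.of_forall fun x => mdot_self_nonneg _)
        (Set.inter_subset_right.trans hUΩ).eventuallyLE
    have h3 : c * ∫ x in A, mdot (pk k x) (pk k x) ∂(volume.restrict U) ≤ η := by
      calc _ ≤ c * (|K| + 1) := by
            gcongr
            linarith [le_abs_self K]
        _ = η := by rw [hc]; field_simp
    refine h1.trans (add_le_add h3 (le_of_eq ?_))
    rw [smul_eq_mul, mul_comm]
end
end
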